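/- Let p and q be positive integers and let s be a real number with s > 1. Then T(p,s,q;−i,−1) = (−1)^p Σ_{l=0}^{p} (−1)^l Λ(l;−i) C(p+q−1−l, q−1) φ(s+p+q−l) + (−1)^p Σ_{l=0}^{q} Λ(l;−i) C(p+q−1−l, p−1) φ(s+p+q−l; −1/4), where C(n,k) denotes the binomial coefficient. -/

import Mathlib

open Complex Finset

/-- `φ(s) = (2^{1-s} - 1) ζ(s)`. -/
noncomputable def phi (s : ℂ) : ℂ := ((2 : ℂ) ^ ((1 : ℂ) - s) - 1) * riemannZeta s

/-- The Lerch value `φ(w;-1/4) = Σ_{m ≥ 1} (-i)^m m^{-w}`. -/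
noncomputable def phiNegQuarter (w : ℂ) : ℂ :=
  ∑' m : ℕ, (-Complex.I) ^ (m + 1) / (((m + 1 : ℕ) : ℂ)) ^ w

/-- The primitive Dirichlet character of conductor 4 with values in `ℂ`. -/
noncomputable def chi4 : DirichletCharacter ℂ 4 := ZMod.χ₄.ringHomComp (Int.castRingHom ℂ)

/-- `L(s,χ₄)`, equal to `Σ_{m ≥ 0} (-1)^m (2m+1)^{-s}` at the relevant arguments. -/
noncomputable def Lchi4 (s : ℂ) : ℂ := DirichletCharacter.LFunction chi4 s

/-- `Λ(ξ;-i)`: equal to `2^{1-ξ}(2^{1-ξ}-1)ζ(ξ)` for even `ξ`, and to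
`-2i L(ξ,χ₄)` for odd `ξ`. -/
noncomputable def LamNegI (ξ : ℕ) : ℂ :=
  if Even ξ then (2 : ℂ) ^ ((1 : ℤ) - ξ) * ((2 : ℂ) ^ ((1 : ℤ) - ξ) - 1) * riemannZeta ξ
  else -(2 * Complex.I * Lchi4 ξ)

/-- `T(p,s,q;x,y) = Σ_{l ≠ 0, m ≥ 1, l+m ≠ 0} x^l y^m / (l^p m^s (l+m)^q)`. -/
noncomputable def T (p : ℕ) (s : ℂ) (q : ℕ) (x y : ℂ) : ℂ :=
  ∑' lm : ℤ × ℕ,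
    if lm.1 ≠ 0 ∧ lm.1 + ((lm.2 : ℤ) + 1) ≠ 0 then
      x ^ lm.1 * y ^ (lm.2 + 1) /
        ((lm.1 : ℂ) ^ p * (((lm.2 + 1 : ℕ) : ℂ)) ^ s *
          (((lm.1 + (lm.2 : ℤ) + 1 : ℤ) : ℂ)) ^ q)
    else 0


/-- The sums occurring in the partial fraction decomposition. -/
noncomputable def Wsum (A B : ℕ) (v M : ℂ) : ℂ :=
  ∑ a ∈ range (A + 1), (Nat.choose (B + a) B : ℂ) * M ^ (B + 1 + a) * v ^ (A + 1 - a)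

lemma Wsum_rec (A B : ℕ) (v M : ℂ) :
    Wsum (A + 1) (B + 1) v M = M * (Wsum (A + 1) B v M + Wsum A (B + 1) v M) := by
  unfold Wsum
  rw [sum_range_succ' _ (A + 1), sum_range_succ' _ (A + 1)]
  simp only [Nat.add_sub_add_right]
  rw [mul_add, mul_add, mul_sum, mul_sum, add_right_comm (∑ i ∈ range (A + 1), M * _), ← sum_add_distrib]
  congr 1
  · apply sum_congr rfl
    intro a _
    have : (Nat.choose (B + 1 + (a + 1)) (B + 1) : ℂ)
        = Nat.choose (B + (a + 1)) B + Nat.choose (B + 1 + a) (B + 1) := by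
      rw [← Nat.cast_add, show B + 1 + (a + 1) = (B + (a+1)) + 1 by ring, Nat.choose_succ_succ,
        show B + (a + 1) = B + 1 + a by ring]
    rw [this]
    ring
  · simp
    ring

lemma Wsum_zero_left (B : ℕ) (v M : ℂ) : Wsum 0 B v M = M ^ (B + 1) * v := by
  simp [Wsum]

lemma Wsum_zero_right (A : ℕ) (v M : ℂ) :
    Wsum (A + 1) 0 v M = v * Wsum A 0 v M + M ^ (A + 2) * v := by
  unfold Wsum
  rw [sum_range_succ _ (A + 1), mul_sum]
  congr 1
  · apply sum_congr rfl
    intro a ha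
    rw [mem_range] at ha
    rw [show A + 1 + 1 - a = (A + 1 - a) + 1 by omega]
    simp
    ring
  · simp only [zero_add, Nat.choose_zero_right, add_tsub_cancel_left]
    ring

lemma partial_fraction (u v M : ℂ) (h : u * v = M * (u - v)) (P Q : ℕ) :
    u ^ (P + 1) * v ^ (Q + 1) = (-1) ^ (Q + 1) * Wsum P Q u (-M)
      + (-1) ^ (P + 1) * Wsum Q P v M := by
  have main : ∀ n P Q : ℕ, P + Q = n → u ^ (P + 1) * v ^ (Q + 1) =
      (-1) ^ (Q + 1) * Wsum P Q u (-M) + (-1) ^ (P + 1) * Wsum Q P v M := by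
    intro n
    induction n with
    | zero =>
      intro P Q hn
      obtain ⟨rfl, rfl⟩ : P = 0 ∧ Q = 0 := by omega
      simp [Wsum]
      linear_combination h
    | succ n ih =>
      intro P Q hn
      rcases P with _ | P <;> rcases Q with _ | Q
      · omega
      · have := ih 0 Q (by omega)
        rw [Wsum_zero_left] at this
        rw [Wsum_zero_right, Wsum_zero_left]
        have e : (-1 : ℂ) ^ (Q + 1) * (-M) ^ (Q + 1) = M ^ (Q + 1) := by
          rw [← mul_pow]; simp
        have e2 : (-1 : ℂ) ^ (Q + 1 + 1) * (-M) ^ (Q + 1 + 1) = M ^ (Q + 1 + 1) := by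
          rw [← mul_pow]; simp
        rw [← mul_assoc, e] at this
        rw [← mul_assoc, e2]
        linear_combination v * this + M ^ (Q + 1) * h
      · have := ih P 0 (by omega)
        rw [Wsum_zero_left] at this
        rw [Wsum_zero_right, Wsum_zero_left]
        have e2 : (-M) ^ (P + 2) = (-1) ^ P * M ^ (P + 2) := by
          rw [neg_pow]; ring
        rw [e2]
        linear_combination u * this + (-1) ^ (P + 1) * M ^ (P + 1) * h
      · have h1 := ih (P + 1) Q (by omega)
        have h2 := ih P (Q + 1) (by omega)
        rw [Wsum_rec, Wsum_rec]
        linear_combination M * h1 - M * h2 + u ^ (P + 1) * v ^ (Q + 1) * h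
  exact main _ P Q rfl

lemma Wsum_reflect (A B : ℕ) (v M : ℂ) :
    Wsum A B v M = ∑ j ∈ range (A + 1),
      (Nat.choose (A + B - j) B : ℂ) * M ^ (A + B + 1 - j) * v ^ (j + 1) := by
  unfold Wsum
  rw [← sum_range_reflect]
  apply sum_congr rfl
  intro j hj
  rw [mem_range] at hj
  rw [show B + (A + 1 - 1 - j) = A + B - j by omega,
    show B + 1 + (A + 1 - 1 - j) = A + B + 1 - j by omega,
    show A + 1 - (A + 1 - 1 - j) = j + 1 by omega]

lemma Wsum_diag (A B : ℕ) (M : ℂ) :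
    Wsum A B M M = (Nat.choose (A + B + 1) A : ℂ) * M ^ (A + B + 2) := by
  have : ∀ a ∈ range (A + 1), (Nat.choose (B + a) B : ℂ) * M ^ (B + 1 + a) * M ^ (A + 1 - a)
     = (Nat.choose (a + B) B : ℂ) * M ^ (A + B + 2) := by
    intro a ha
    rw [mem_range] at ha
    rw [mul_assoc, ← pow_add, show B + 1 + a + (A + 1 - a) = A + B + 2 by omega, add_comm B a]
  unfold Wsum
  rw [sum_congr rfl this, ← sum_mul, ← Nat.cast_sum, Nat.sum_range_add_choose,
    show A + B + 1 = A + (B + 1) by ring, Nat.choose_symm_add]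

lemma hasSum_of_eq {α : Type*} {f g : α → ℂ} {a : ℂ} (h : HasSum f a) (e : ∀ n, g n = f n) :
    HasSum g a := by
  rwa [show g = f from funext e]

/-- Alternating zeta. -/
lemma hasSum_alt (w : ℂ) (hw : 1 < w.re) :
    HasSum (fun n : ℕ => (-1 : ℂ) ^ n / (n : ℂ) ^ w) (phi w) := by
  have hs : Summable (fun n : ℕ => 1 / (n : ℂ) ^ w) := Complex.summable_one_div_nat_cpow.2 hw
  have hz : HasSum (fun n : ℕ => 1 / (n : ℂ) ^ w) (riemannZeta w) := by
    rw [zeta_eq_tsum_one_div_nat_cpow hw]; exact hs.hasSum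
  have he : HasSum (fun n : ℕ => 1 / ((2 * n : ℕ) : ℂ) ^ w) (2 ^ (-w) * riemannZeta w) := by
    refine hasSum_of_eq (hz.mul_left (2 ^ (-w))) fun n => ?_
    rw [Nat.cast_mul, Complex.natCast_mul_natCast_cpow, cpow_neg]
    simp [mul_comm]
  obtain ⟨b, ho⟩ : ∃ b, HasSum (fun n : ℕ => 1 / ((2 * n + 1 : ℕ) : ℂ) ^ w) b :=
    (hs.comp_injective (i := fun n : ℕ => 2 * n + 1) (fun a b h => by simpa using h))
  have hz2 : _ = _ :=
    (HasSum.even_add_odd (f := fun n : ℕ => 1 / (n : ℂ) ^ w) he ho).unique hz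
  have e2 : HasSum (fun n : ℕ => (-1 : ℂ) ^ (2 * n) / ((2 * n : ℕ) : ℂ) ^ w)
      (2 ^ (-w) * riemannZeta w) := by
    refine hasSum_of_eq he fun n => ?_
    simp
  have o2 : HasSum (fun n : ℕ => (-1 : ℂ) ^ (2 * n + 1) / ((2 * n + 1 : ℕ) : ℂ) ^ w) (-b) := by
    refine hasSum_of_eq ho.neg fun n => ?_
    rw [pow_succ, pow_mul]
    simp [neg_div]
  have := HasSum.even_add_odd (f := fun n : ℕ => (-1 : ℂ) ^ n / (n : ℂ) ^ w) e2 o2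
  have e : phi w = 2 ^ (-w) * riemannZeta w + -b := by
    unfold phi
    rw [sub_eq_add_neg 1 w, cpow_add _ _ two_ne_zero, cpow_one]
    linear_combination hz2
  rw [e]
  exact this

lemma chi4_vals (a : ℕ) : chi4 ((4 * a : ℕ) : ZMod 4) = 0 ∧ chi4 ((4 * a + 1 : ℕ) : ZMod 4) = 1 ∧
    chi4 ((4 * a + 2 : ℕ) : ZMod 4) = 0 ∧ chi4 ((4 * a + 3 : ℕ) : ZMod 4) = -1 := by
  have h4 : (4 : ZMod 4) = 0 := by decide
  have h0 : ZMod.χ₄ 0 = 0 := by decide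
  have h1 : ZMod.χ₄ 1 = 1 := by decide
  have h2 : ZMod.χ₄ 2 = 0 := by decide
  have h3 : ZMod.χ₄ 3 = -1 := by decide
  refine ⟨?_, ?_, ?_, ?_⟩ <;>
  · push_cast
    rw [h4]
    simp only [zero_mul, zero_add]
    unfold chi4
    rw [MulChar.ringHomComp_apply]
    simp [h0, h1, h2, h3]

lemma sum_range_four_mul {f : ℕ → ℂ} (K : ℕ) :
    ∑ n ∈ range (4 * K), f n = ∑ k ∈ range K,
      (f (4 * k) + f (4 * k + 1) + f (4 * k + 2) + f (4 * k + 3)) := by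
  induction K with
  | zero => simp
  | succ K ih =>
    rw [show 4 * (K + 1) = 4 * K + 1 + 1 + 1 + 1 by ring]
    simp only [sum_range_succ, ih]
    ring

/-- Paired terms of the `L`-series. -/
noncomputable def Fr (k : ℕ) (s : ℝ) : ℝ := (4 * k + 1 : ℝ) ^ (-s) - (4 * k + 3 : ℝ) ^ (-s)

lemma Fr_nonneg (k : ℕ) (s : ℝ) (hs : 1 ≤ s) : 0 ≤ Fr k s := by
  unfold Fr
  rw [sub_nonneg]
  apply Real.rpow_le_rpow_of_nonpos <;> first | positivity | linarith

lemma Fr_le (k : ℕ) (s : ℝ) (hs : 1 ≤ s) (hs2 : s ≤ 2) : Fr k s ≤ 4 * (1 / ((k : ℝ) + 1) ^ 2) := by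
  unfold Fr
  have ha : (1 : ℝ) ≤ 4 * k + 1 := by
    have : (0 : ℝ) ≤ k := by positivity
    linarith
  set a : ℝ := 4 * k + 1 with hadef
  have e : (4 * k + 3 : ℝ) = a + 2 := by rw [hadef]; ring
  rw [e]
  have h0 : 0 < a := by linarith
  have h2 : (a + 2) ^ (-s) = a ^ (-s) * (a / (a + 2)) ^ s := by
    rw [Real.div_rpow h0.le (by linarith), Real.rpow_neg h0.le, Real.rpow_neg (by linarith)]
    field_simp
  have h3 : (a / (a + 2)) ^ (2 : ℝ) ≤ (a / (a + 2)) ^ s := by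
    apply Real.rpow_le_rpow_of_exponent_ge (by positivity) _ hs2
    rw [div_le_one (by positivity)]; linarith
  have h4 : a ^ (-s) ≤ a⁻¹ := by
    rw [← Real.rpow_neg_one]
    exact Real.rpow_le_rpow_of_exponent_le ha (by linarith)
  have h5 : 0 ≤ 1 - (a / (a + 2)) ^ (2 : ℝ) := by
    rw [sub_nonneg]
    apply Real.rpow_le_one (by positivity) _ (by norm_num)
    rw [div_le_one (by positivity)]; linarith
  have h6 : 0 < a ^ (-s) := by positivity
  calc a ^ (-s) - (a + 2) ^ (-s) = a ^ (-s) * (1 - (a / (a + 2)) ^ s) := by rw [h2]; ring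
    _ ≤ a ^ (-s) * (1 - (a / (a + 2)) ^ (2 : ℝ)) := by
      apply mul_le_mul_of_nonneg_left _ h6.le; linarith
    _ ≤ a⁻¹ * (1 - (a / (a + 2)) ^ (2 : ℝ)) := mul_le_mul_of_nonneg_right h4 h5
    _ = 4 * (a + 1) / (a * (a + 2) ^ 2) := by
      rw [Real.rpow_two]; field_simp; ring
    _ ≤ 4 * (1 / ((k : ℝ) + 1) ^ 2) := by
      rw [mul_one_div, div_le_div_iff₀ (by positivity) (by positivity)]
      have : (k : ℝ) + 1 ≤ a := by
        have : (0 : ℝ) ≤ k := by positivity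
        rw [hadef]; linarith
      have h7 : ((k : ℝ) + 1) ^ 2 ≤ a ^ 2 := by gcongr
      calc 4 * (a + 1) * ((k : ℝ) + 1) ^ 2 ≤ 4 * (a + 1) * a ^ 2 := by gcongr
        _ ≤ _ := by nlinarith

lemma Fr_bound_summable : Summable (fun k : ℕ => 4 * (1 / ((k : ℝ) + 1) ^ 2)) := by
  apply Summable.mul_left
  have := (summable_nat_add_iff 1).2 (Real.summable_one_div_nat_pow.2 (one_lt_two))
  simpa using this

lemma Fr_summable (s : ℝ) (hs : 1 ≤ s) (hs2 : s ≤ 2) : Summable (fun k => ((Fr k s : ℝ) : ℂ)) := by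
  apply Summable.of_norm_bounded Fr_bound_summable
  intro k
  rw [norm_real, Real.norm_of_nonneg (Fr_nonneg k s hs)]
  exact Fr_le k s hs hs2

lemma sum_chi4_eq (s : ℝ) (K : ℕ) :
    ∑ n ∈ range (4 * K), chi4 (n : ZMod 4) / (n : ℂ) ^ (s : ℂ) = ∑ k ∈ range K, ((Fr k s : ℝ) : ℂ) := by
  rw [sum_range_four_mul]
  apply sum_congr rfl
  intro k _
  obtain ⟨h0, h1, h2, h3⟩ := chi4_vals k
  rw [h0, h1, h2, h3]
  unfold Fr
  rw [ofReal_sub, ofReal_cpow (by positivity), ofReal_cpow (by positivity)]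
  push_cast
  rw [cpow_neg, cpow_neg]
  ring

open Filter Topology in
lemma tendsto_L_of_gt (s : ℝ) (hs : 1 < s) :
    Tendsto (fun K : ℕ => ∑ n ∈ range (4 * K), chi4 (n : ZMod 4) / (n : ℂ) ^ (s : ℂ)) atTop
      (𝓝 (Lchi4 s)) := by
  have h : HasSum (fun n : ℕ => LSeries.term (fun n => chi4 (n : ZMod 4)) s n) (Lchi4 s) := by
    unfold Lchi4
    rw [DirichletCharacter.LFunction_eq_LSeries chi4 (s := (s : ℂ)) (by simpa using hs)]
    exact (DirichletCharacter.LSeriesSummable_of_one_lt_re chi4 (s := (s : ℂ)) (by simpa using hs)).hasSum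
  have h2 : HasSum (fun n : ℕ => chi4 (n : ZMod 4) / (n : ℂ) ^ (s : ℂ)) (Lchi4 s) := by
    refine hasSum_of_eq h fun n => ?_
    rw [LSeries.term_def]
    split_ifs with hn
    · subst hn
      have := (chi4_vals 0).1
      simp only [mul_zero] at this
      rw [this, zero_div]
    · rfl
  exact h2.tendsto_sum_nat.comp (tendsto_id.const_mul_atTop' (by norm_num : 0 < 4))

open Filter Topology in
lemma Fr_tsum_one : ∑' k, ((Fr k 1 : ℝ) : ℂ) = Lchi4 1 := by
  have hne : chi4 ≠ 1 := by
    intro h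
    have h3 := (chi4_vals 0).2.2.2
    rw [h, MulChar.one_apply (by decide)] at h3
    norm_num at h3
  have hF : Tendsto (fun s : ℝ => ∑' k, ((Fr k s : ℝ) : ℂ)) (𝓝[>] 1)
      (𝓝 (∑' k, ((Fr k 1 : ℝ) : ℂ))) := by
    apply tendsto_tsum_of_dominated_convergence Fr_bound_summable
    · intro k
      have : Continuous (fun s => ((Fr k s : ℝ) : ℂ)) := by
        unfold Fr
        apply Complex.continuous_ofReal.comp
        apply Continuous.sub
        · exact Continuous.rpow continuous_const continuous_neg (fun s => Or.inl (by positivity))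
        · exact Continuous.rpow continuous_const continuous_neg (fun s => Or.inl (by positivity))
      exact (this.tendsto 1).mono_left nhdsWithin_le_nhds
    · have : Set.Ioc (1:ℝ) 2 ∈ 𝓝[>] (1:ℝ) := Ioc_mem_nhdsGT (by norm_num)
      filter_upwards [this] with s hs k
      rw [norm_real, Real.norm_of_nonneg (Fr_nonneg k s hs.1.le)]
      exact Fr_le k s hs.1.le hs.2
  have hL : Tendsto (fun s : ℝ => Lchi4 s) (𝓝[>] 1) (𝓝 (Lchi4 1)) := by
    have hc : Continuous (fun s : ℝ => Lchi4 s) :=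
      (DirichletCharacter.differentiable_LFunction hne).continuous.comp Complex.continuous_ofReal
    have := (hc.tendsto 1).mono_left (nhdsWithin_le_nhds (s := Set.Ioi 1))
    simpa using this
  refine tendsto_nhds_unique hF (hL.congr' ?_)
  have : Set.Ioc (1:ℝ) 2 ∈ 𝓝[>] (1:ℝ) := Ioc_mem_nhdsGT (by norm_num)
  filter_upwards [this] with s hs
  have h1 := tendsto_L_of_gt s hs.1
  simp_rw [sum_chi4_eq] at h1
  exact tendsto_nhds_unique h1 (Fr_summable s hs.1.le hs.2).hasSum.tendsto_sum_nat

open Filter Topology in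
lemma tendsto_L (j : ℕ) (hj : 1 ≤ j) :
    Tendsto (fun K : ℕ => ∑ n ∈ range (4 * K), chi4 (n : ZMod 4) / (n : ℂ) ^ j) atTop
      (𝓝 (Lchi4 j)) := by
  rcases hj.eq_or_lt with rfl | hj
  · have := (Fr_summable 1 le_rfl (by norm_num)).hasSum.tendsto_sum_nat
    rw [Fr_tsum_one] at this
    simp_rw [← sum_chi4_eq] at this
    simpa using this
  · have := tendsto_L_of_gt (j : ℝ) (by exact_mod_cast hj)
    simpa using this

/-- The terms of the inner series. -/
noncomputable def gt (j : ℕ) (l : ℤ) : ℂ := (-I) ^ l * ((l : ℂ)⁻¹) ^ j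

lemma sum_Ico_symm (g : ℤ → ℂ) (N : ℕ) (h0 : g 0 = 0) :
    ∑ l ∈ Ico (-(N : ℤ)) N, g l = ∑ n ∈ range N, (g n + g (-n)) + g (-N) := by
  induction N with
  | zero => simp [h0]
  | succ N ih =>
    have e : Ico (-((N + 1 : ℕ) : ℤ)) ((N + 1 : ℕ) : ℤ)
        = insert (-((N + 1 : ℕ) : ℤ)) (insert (N : ℤ) (Ico (-(N : ℤ)) N)) := by
      ext x; simp only [mem_insert, mem_Ico]; push_cast; omega
    rw [e, sum_insert, sum_insert, ih, sum_range_succ]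
    · ring
    · simp
    · simp only [mem_insert, mem_Ico]; push_cast; omega

open Filter Topology in
lemma gt_tendsto_zero (j : ℕ) (hj : 1 ≤ j) {f : ℕ → ℤ}
    (hf : Tendsto (fun n => |(f n : ℝ)|) atTop atTop) :
    Tendsto (fun n => gt j (f n)) atTop (𝓝 0) := by
  rw [tendsto_zero_iff_norm_tendsto_zero]
  have : ∀ n, ‖gt j (f n)‖ = (|(f n : ℝ)|⁻¹) ^ j := by
    intro n
    unfold gt
    simp [norm_zpow]
  simp_rw [this]
  have h := (tendsto_inv_atTop_zero.comp hf).pow j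
  rw [zero_pow (by omega)] at h
  exact h

lemma gt_zero (j : ℕ) (hj : 1 ≤ j) : gt j 0 = 0 := by
  unfold gt
  simp; omega

lemma gt_pair (j n : ℕ) : gt j n + gt j (-n) = ((-I) ^ n + (-1) ^ j * I ^ n) * ((n : ℂ)⁻¹) ^ j := by
  unfold gt
  rw [zpow_neg, zpow_natCast, ← inv_pow]
  have : (-I)⁻¹ = I := by rw [inv_neg, inv_I, neg_neg]
  rw [this]
  push_cast
  rw [inv_neg, neg_pow ((n : ℂ)⁻¹)]
  ring

lemma LamNegI_zero : LamNegI 0 = -1 := by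
  unfold LamNegI
  simp [riemannZeta_zero]
  norm_num

open Filter Topology in
lemma tendsto_Lam (j : ℕ) (hj : 1 ≤ j) :
    Tendsto (fun K : ℕ => ∑ l ∈ Ico (-((4 * K : ℕ) : ℤ)) ((4 * K : ℕ) : ℤ), gt j l) atTop
      (𝓝 (LamNegI j)) := by
  have h4 : Tendsto (fun K : ℕ => 4 * K) atTop atTop :=
    tendsto_id.const_mul_atTop' (by norm_num : 0 < 4)
  have hb : Tendsto (fun K : ℕ => gt j (-((4 * K : ℕ) : ℤ))) atTop (𝓝 0) := by
    apply gt_tendsto_zero j hj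
    have := (tendsto_natCast_atTop_atTop (R := ℝ)).comp h4
    refine this.congr fun K => ?_
    simp
  simp_rw [fun K => sum_Ico_symm (gt j) (4 * K) (gt_zero j hj), gt_pair]
  rw [← add_zero (LamNegI j)]
  refine Tendsto.add ?_ hb
  unfold LamNegI
  split_ifs with he
  · obtain ⟨k, hk⟩ := he
    have hs := hasSum_alt (j : ℂ) (by simp; omega)
    have h1 : HasSum (fun n : ℕ => ((-I) ^ n + (-1) ^ j * I ^ n) * ((n : ℂ)⁻¹) ^ j)
        ((2 : ℂ) ^ ((1 : ℤ) - j) * phi j + 0) := by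
      refine HasSum.even_add_odd ?_ ?_
      · refine hasSum_of_eq (hs.mul_left _) fun n => ?_
        rw [pow_mul, pow_mul, neg_sq, I_sq, Even.neg_one_pow ⟨k, hk⟩, cpow_natCast,
          zpow_sub₀ two_ne_zero]
        push_cast
        rw [zpow_natCast, zpow_one, mul_inv, mul_pow]
        rw [inv_pow, inv_pow, div_eq_mul_inv, div_eq_mul_inv]
        ring
      · refine hasSum_of_eq hasSum_zero fun n => ?_
        rw [Even.neg_one_pow ⟨k, hk⟩, Odd.neg_pow ⟨n, rfl⟩]
        ring
    have h2 := h1.tendsto_sum_nat.comp h4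
    refine h2.congr' (by rfl) |>.trans ?_
    apply le_of_eq
    congr 1
    unfold phi
    rw [add_zero, mul_assoc]
    congr 3
    rw [← cpow_intCast]
    push_cast
    rfl
  · have h1 := (tendsto_L j hj).const_mul (-(2 * I))
    rw [neg_mul] at h1
    refine h1.congr fun K => ?_
    rw [mul_sum, sum_range_four_mul, sum_range_four_mul]
    apply sum_congr rfl
    intro k _
    obtain ⟨c0, c1, c2, c3⟩ := chi4_vals k
    rw [c0, c1, c2, c3, Odd.neg_one_pow (Nat.not_even_iff_odd.1 he)]
    have i4 : I ^ (4 * k) = 1 := by rw [pow_mul, I_pow_four, one_pow]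
    have i4' : (-I) ^ (4 * k) = 1 := by
      rw [pow_mul, Even.neg_pow (by decide), I_pow_four, one_pow]
    have i3 : I ^ 3 = -I := by rw [pow_succ, I_sq]; ring
    have i3' : (-I) ^ 3 = I := by rw [Odd.neg_pow (by decide), i3]; ring
    simp only [pow_add, i4, i4', neg_sq, I_sq, i3, i3', pow_one, div_eq_mul_inv, inv_pow]
    ring

open Filter Topology in
lemma tendsto_Lam_shift (j : ℕ) (hj : 1 ≤ j) (m : ℕ) :
    Tendsto (fun K : ℕ => ∑ l ∈ Ico (-((4 * K : ℕ) : ℤ)) ((4 * K : ℕ) : ℤ), gt j (l + m)) atTop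
      (𝓝 (LamNegI j)) := by
  have h4 : Tendsto (fun K : ℕ => ((4 * K : ℕ) : ℝ)) atTop atTop :=
    tendsto_natCast_atTop_atTop.comp (tendsto_id.const_mul_atTop' (by norm_num : 0 < 4))
  induction m with
  | zero => simpa using tendsto_Lam j hj
  | succ m ih =>
    have e : ∀ (g : ℤ → ℂ) (N : ℕ), ∑ l ∈ Ico (-(N : ℤ)) N, g (l + 1) =
        ∑ l ∈ Ico (-(N : ℤ)) N, g l + (g N - g (-N)) := by
      intro g N
      induction N with
      | zero => simp
      | succ N ih =>
        have e : Ico (-((N + 1 : ℕ) : ℤ)) ((N + 1 : ℕ) : ℤ)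
            = insert (-((N + 1 : ℕ) : ℤ)) (insert (N : ℤ) (Ico (-(N : ℤ)) N)) := by
          ext x; simp only [mem_insert, mem_Ico]; push_cast; omega
        have n1 : (N : ℤ) ∉ (Ico (-(N : ℤ)) N) := by simp
        have n2 : -((N + 1 : ℕ) : ℤ) ∉ (insert (N : ℤ) (Ico (-(N : ℤ)) N)) := by
          simp only [mem_insert, mem_Ico]; push_cast; omega
        rw [e, sum_insert n2, sum_insert n1, ih, sum_insert n2, sum_insert n1]
        push_cast
        rw [show -((N : ℤ) + 1) + 1 = -N by ring]
        ring
    have e2 : ∀ K : ℕ, ∑ l ∈ Ico (-((4 * K : ℕ) : ℤ)) ((4 * K : ℕ) : ℤ), gt j (l + (m + 1 : ℕ)) =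
        ∑ l ∈ Ico (-((4 * K : ℕ) : ℤ)) ((4 * K : ℕ) : ℤ), gt j (l + m) +
          (gt j ((4 * K : ℕ) + m) - gt j (-(4 * K : ℕ) + m)) := by
      intro K
      rw [← e (fun l => gt j (l + m)) (4 * K)]
      apply sum_congr rfl
      intro l _
      congr 1
      push_cast
      ring
    simp_rw [e2]
    have h5 : Tendsto (fun K : ℕ => gt j ((4 * K : ℕ) + m)) atTop (𝓝 0) := by
      apply gt_tendsto_zero j hj
      refine tendsto_atTop_mono (fun K => ?_) h4
      refine le_trans ?_ (le_abs_self _)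
      push_cast
      linarith [Nat.cast_nonneg (α := ℝ) m]
    have h6 : Tendsto (fun K : ℕ => gt j (-(4 * K : ℕ) + m)) atTop (𝓝 0) := by
      apply gt_tendsto_zero j hj
      refine tendsto_atTop_mono (fun K => ?_) (tendsto_atTop_add_const_right _ (-(m : ℝ)) h4)
      refine le_trans ?_ (neg_le_abs _)
      push_cast
      linarith
    simpa using ih.add (h5.sub h6)

/-- General term for fixed `m`. -/
noncomputable def tm (p q m : ℕ) (l : ℤ) : ℂ :=
  (-I) ^ l * (((l : ℂ)⁻¹) ^ p * (((l : ℂ) + m)⁻¹) ^ q)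

lemma norm_inv_int_le_one (l : ℤ) : ‖((l : ℂ)⁻¹)‖ ≤ 1 := by
  rcases eq_or_ne l 0 with rfl | h
  · simp
  · rw [norm_inv, norm_intCast]
    apply inv_le_one_of_one_le₀
    exact_mod_cast Int.one_le_abs h

lemma norm_tm_le (p q m : ℕ) (hp : 0 < p) (hq : 0 < q) (l : ℤ) :
    ‖tm p q m l‖ ≤ 1 / (l : ℝ) ^ 2 + 1 / ((l + m : ℤ) : ℝ) ^ 2 := by
  unfold tm
  have e : ((l : ℂ) + m) = ((l + m : ℤ) : ℂ) := by push_cast; rfl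
  have hI : ‖(-I) ^ l‖ = 1 := by simp [norm_zpow]
  rw [e, norm_mul, norm_mul, hI, one_mul, norm_pow, norm_pow]
  have h1 := pow_le_of_le_one (norm_nonneg _) (norm_inv_int_le_one l) hp.ne'
  have h2 := pow_le_of_le_one (norm_nonneg _) (norm_inv_int_le_one (l + m)) hq.ne'
  have h3 : ∀ k : ℤ, 1 / (k : ℝ) ^ 2 = ‖((k : ℂ)⁻¹)‖ ^ 2 := by
    intro k
    rw [norm_inv, norm_intCast, inv_pow, sq_abs, one_div]
  rw [h3, h3]
  calc _ ≤ ‖((l : ℂ)⁻¹)‖ * ‖(((l + m : ℤ) : ℂ)⁻¹)‖ := by gcongr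
    _ ≤ _ := by nlinarith [sq_nonneg (‖((l : ℂ)⁻¹)‖ - ‖(((l + m : ℤ) : ℂ)⁻¹)‖),
        sq_nonneg (‖((l : ℂ)⁻¹)‖ + ‖(((l + m : ℤ) : ℂ)⁻¹)‖)]

lemma summable_tm (p q m : ℕ) (hp : 0 < p) (hq : 0 < q) : Summable (tm p q m) := by
  have h : Summable (fun l : ℤ => 1 / (l : ℝ) ^ 2) := Real.summable_one_div_int_pow.2 one_lt_two
  refine Summable.of_norm_bounded (h.add ?_) (norm_tm_le p q m hp hq)
  have h2 : Summable ((fun l : ℤ => 1 / (l : ℝ) ^ 2) ∘ (Equiv.addRight (m : ℤ))) :=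
    (Equiv.summable_iff _).2 h
  refine h2.congr fun l => ?_
  rw [Function.comp_apply, Equiv.coe_addRight]

lemma summable_full (p q : ℕ) (hp : 0 < p) (hq : 0 < q) (s : ℝ) (hs : 1 < s) :
    Summable (fun x : ℕ × ℤ =>
      (-1 : ℂ) ^ (x.1 + 1) / ((x.1 + 1 : ℕ) : ℂ) ^ (s : ℂ) * tm p q (x.1 + 1) x.2) := by
  have h : Summable (fun l : ℤ => 1 / (l : ℝ) ^ 2) := Real.summable_one_div_int_pow.2 one_lt_two
  have hn : Summable (fun n : ℕ => 1 / ((n + 1 : ℕ) : ℝ) ^ s) :=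
    (summable_nat_add_iff 1).2 (Real.summable_one_div_nat_rpow.2 hs)
  have h1 : Summable (fun x : ℕ × ℤ => 1 / ((x.1 + 1 : ℕ) : ℝ) ^ s * (1 / (x.2 : ℝ) ^ 2)) :=
    hn.mul_of_nonneg h (fun n => by positivity) (fun n => by positivity)
  have h2 : Summable (fun x : ℕ × ℤ => 1 / ((x.1 + 1 : ℕ) : ℝ) ^ s *
      (1 / ((x.2 + (x.1 + 1 : ℕ) : ℤ) : ℝ) ^ 2)) := by
    have h3 : Summable ((fun x : ℕ × ℤ => 1 / ((x.1 + 1 : ℕ) : ℝ) ^ s * (1 / (x.2 : ℝ) ^ 2)) ∘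
        (Equiv.prodShear (Equiv.refl ℕ) (fun n => Equiv.addRight ((n + 1 : ℕ) : ℤ)))) :=
      (Equiv.summable_iff _).2 h1
    refine h3.congr fun x => ?_
    rw [Function.comp_apply, Equiv.prodShear_apply]
    simp only [Equiv.coe_addRight, Equiv.refl_apply]
  refine Summable.of_norm_bounded (h1.add h2) ?_
  rintro ⟨n, l⟩
  rw [norm_mul, ← mul_add]
  apply mul_le_mul _ (norm_tm_le p q (n + 1) hp hq l) (norm_nonneg _) (by positivity)
  rw [norm_div, norm_pow, norm_neg, norm_one, one_pow, norm_natCast_cpow_of_pos (by positivity)]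
  simp

lemma sum_split (P Q m : ℕ) (hm : 0 < m) (l : ℤ) :
    tm (P + 1) (Q + 1) m l =
      (-1) ^ (Q + 1) * ∑ j ∈ range (P + 1), (Nat.choose (P + Q - j) Q : ℂ) *
        (-(m : ℂ)⁻¹) ^ (P + Q + 1 - j) * gt (j + 1) l +
      (-1) ^ (P + 1) * I ^ m * ∑ j ∈ range (Q + 1), (Nat.choose (Q + P - j) P : ℂ) *
        ((m : ℂ)⁻¹) ^ (Q + P + 1 - j) * gt (j + 1) (l + m) -
      ((if l = 0 then (-1) ^ (P + 1) * Wsum Q P ((m : ℂ)⁻¹) ((m : ℂ)⁻¹) else 0) +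
      (if l = -m then I ^ m * (-1) ^ (Q + 1) * Wsum P Q (-(m : ℂ)⁻¹) (-(m : ℂ)⁻¹) else 0)) := by
  have hm0 : (m : ℂ) ≠ 0 := by exact_mod_cast hm.ne'
  have hI0 : (-I : ℂ) ≠ 0 := by simp
  have hIm : (-I) ^ (m : ℤ) * I ^ m = 1 := by
    rw [zpow_natCast, ← mul_pow]; simp
  have hIl : (-I) ^ l = I ^ m * (-I) ^ (l + m) := by
    rw [zpow_add₀ hI0]; linear_combination (-(-I) ^ l) * hIm
  have e1 : ∑ j ∈ range (P + 1), (Nat.choose (P + Q - j) Q : ℂ) *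
        (-(m : ℂ)⁻¹) ^ (P + Q + 1 - j) * gt (j + 1) l
      = (-I) ^ l * Wsum P Q ((l : ℂ)⁻¹) (-(m : ℂ)⁻¹) := by
    rw [Wsum_reflect, mul_sum]
    apply sum_congr rfl
    intro j _
    unfold gt
    ring
  have e2 : I ^ m * ∑ j ∈ range (Q + 1), (Nat.choose (Q + P - j) P : ℂ) *
        ((m : ℂ)⁻¹) ^ (Q + P + 1 - j) * gt (j + 1) (l + m)
      = (-I) ^ l * Wsum Q P (((l : ℂ) + m)⁻¹) ((m : ℂ)⁻¹) := by
    rw [Wsum_reflect, mul_sum, mul_sum]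
    apply sum_congr rfl
    intro j _
    unfold gt
    rw [hIl]
    push_cast
    ring
  have W0 : ∀ A B M, Wsum A B 0 M = 0 := by
    intro A B M
    rw [Wsum_reflect]
    apply sum_eq_zero
    intro j _
    simp
  rw [e1, mul_assoc _ (I ^ m), e2]
  unfold tm
  by_cases h0 : l = 0
  · subst h0
    have : ¬ ((0 : ℤ) = -m) := by omega
    simp [W0, this]
  · by_cases h1 : l = -m
    · subst h1
      have e : (-I) ^ (-(m : ℤ)) = I ^ m := by
        rw [hIl]; simp
      have h2 : ¬ m = 0 := by omega
      simp only [e]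
      simp [W0, h2, inv_neg]
      ring
    · rw [if_neg h0, if_neg h1]
      have a0 : (l : ℂ) ≠ 0 := by exact_mod_cast h0
      have a1 : (l : ℂ) + m ≠ 0 := by
        have : l + m ≠ 0 := by omega
        exact_mod_cast this
      rw [partial_fraction ((l : ℂ)⁻¹) (((l : ℂ) + m)⁻¹) ((m : ℂ)⁻¹) (by field_simp; ring) P Q]
      ring

/-- The value of the inner sum. -/
noncomputable def Sm (p q m : ℕ) : ℂ :=
  (-1 : ℂ) ^ p * ∑ l ∈ range (p + 1), (-1 : ℂ) ^ l * LamNegI l *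
      (Nat.choose (p + q - 1 - l) (q - 1) : ℂ) * ((m : ℂ)⁻¹) ^ (p + q - l) +
  (-1 : ℂ) ^ p * ∑ l ∈ range (q + 1), LamNegI l *
      (Nat.choose (p + q - 1 - l) (p - 1) : ℂ) * (I ^ m * ((m : ℂ)⁻¹) ^ (p + q - l))

open Filter Topology in
lemma hasSum_tm (P Q m : ℕ) (hm : 0 < m) :
    HasSum (tm (P + 1) (Q + 1) m) (Sm (P + 1) (Q + 1) m) := by
  have hS := summable_tm (P + 1) (Q + 1) m (by omega) (by omega)
  have h4 : Tendsto (fun K : ℕ => 4 * K) atTop atTop :=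
    tendsto_id.const_mul_atTop' (by norm_num : 0 < 4)
  have hfin : Tendsto (fun K : ℕ => Ico (-((4 * K : ℕ) : ℤ)) ((4 * K : ℕ) : ℤ)) atTop atTop := by
    apply tendsto_atTop_finset_of_monotone
    · intro a b hab
      apply Ico_subset_Ico <;> push_cast <;> omega
    · intro x
      refine ⟨x.natAbs + 1, ?_⟩
      rw [mem_Ico]
      constructor <;> omega
  have hlim := hS.hasSum.comp hfin
  suffices h : Tendsto (fun K : ℕ => ∑ l ∈ Ico (-((4 * K : ℕ) : ℤ)) ((4 * K : ℕ) : ℤ),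
      tm (P + 1) (Q + 1) m l) atTop (𝓝 (Sm (P + 1) (Q + 1) m)) by
    rw [← tendsto_nhds_unique hlim h]
    exact hS.hasSum
  have t1 : Tendsto (fun K : ℕ => (-1 : ℂ) ^ (Q + 1) *
      ∑ j ∈ range (P + 1), (Nat.choose (P + Q - j) Q : ℂ) *
        (-(m : ℂ)⁻¹) ^ (P + Q + 1 - j) *
        ∑ l ∈ Ico (-((4 * K : ℕ) : ℤ)) ((4 * K : ℕ) : ℤ), gt (j + 1) l) atTop _ :=
    (tendsto_finsetSum (range (P + 1)) fun j _ =>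
      (tendsto_Lam (j + 1) (by omega)).const_mul _).const_mul _
  have t2 : Tendsto (fun K : ℕ => (-1 : ℂ) ^ (P + 1) * I ^ m *
      ∑ j ∈ range (Q + 1), (Nat.choose (Q + P - j) P : ℂ) *
        ((m : ℂ)⁻¹) ^ (Q + P + 1 - j) *
        ∑ l ∈ Ico (-((4 * K : ℕ) : ℤ)) ((4 * K : ℕ) : ℤ), gt (j + 1) (l + m)) atTop _ :=
    (tendsto_finsetSum (range (Q + 1)) fun j _ =>
      (tendsto_Lam_shift (j + 1) (by omega) m).const_mul _).const_mul _
  have t3 := (t1.add t2).sub (tendsto_const_nhds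
    (x := (-1) ^ (P + 1) * Wsum Q P ((m : ℂ)⁻¹) ((m : ℂ)⁻¹) +
      I ^ m * (-1) ^ (Q + 1) * Wsum P Q (-(m : ℂ)⁻¹) (-(m : ℂ)⁻¹)))
  have t4 := t3.congr' (f₂ := fun K : ℕ => ∑ l ∈ Ico (-((4 * K : ℕ) : ℤ)) ((4 * K : ℕ) : ℤ),
      tm (P + 1) (Q + 1) m l) (by
    filter_upwards [eventually_ge_atTop m] with K hK
    rw [sum_congr rfl (fun l _ => sum_split P Q m hm l), sum_sub_distrib, sum_add_distrib,
      sum_add_distrib, sum_ite_eq', sum_ite_eq', if_pos (by rw [mem_Ico]; push_cast; omega),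
      if_pos (by rw [mem_Ico]; push_cast; omega), ← mul_sum, ← mul_sum, sum_comm,
      sum_comm (s := Ico (-((4 * K : ℕ) : ℤ)) ((4 * K : ℕ) : ℤ)) (t := range (Q + 1))]
    simp only [mul_sum])
  convert t4 using 2
  unfold Sm
  rw [Wsum_diag, Wsum_diag, sum_range_succ', sum_range_succ' _ (Q + 1), LamNegI_zero]
  have c1 : ∑ j ∈ range (P + 1), (-1 : ℂ) ^ (j + 1) * LamNegI (j + 1) *
      (Nat.choose (P + 1 + (Q + 1) - 1 - (j + 1)) (Q + 1 - 1) : ℂ) *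
        ((m : ℂ)⁻¹) ^ (P + 1 + (Q + 1) - (j + 1)) = (-1) ^ (P + Q) * 
      ∑ j ∈ range (P + 1), (Nat.choose (P + Q - j) Q : ℂ) *
        (-(m : ℂ)⁻¹) ^ (P + Q + 1 - j) * LamNegI (j + 1) := by
    rw [mul_sum]
    apply sum_congr rfl
    intro j hj
    rw [mem_range] at hj
    rw [show P + 1 + (Q + 1) - 1 - (j + 1) = P + Q - j by omega,
      show P + 1 + (Q + 1) - (j + 1) = P + Q + 1 - j by omega, neg_pow (m : ℂ)⁻¹]
    have : (-1 : ℂ) ^ (P + Q) * (-1) ^ (P + Q + 1 - j) = (-1) ^ (j + 1) := by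
      rw [← pow_add, show P + Q + (P + Q + 1 - j) = (j + 1) + 2 * (P + Q - j) by omega, pow_add,
        pow_mul]
      simp
    simp only [Nat.add_sub_cancel]
    rw [← this]
    ring
  have c2 : ∑ j ∈ range (Q + 1), LamNegI (j + 1) *
      (Nat.choose (P + 1 + (Q + 1) - 1 - (j + 1)) (P + 1 - 1) : ℂ) *
        (I ^ m * ((m : ℂ)⁻¹) ^ (P + 1 + (Q + 1) - (j + 1))) = I ^ m * 
      ∑ j ∈ range (Q + 1), (Nat.choose (Q + P - j) P : ℂ) *
        ((m : ℂ)⁻¹) ^ (Q + P + 1 - j) * LamNegI (j + 1) := by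
    rw [mul_sum]
    apply sum_congr rfl
    intro j hj
    rw [mem_range] at hj
    rw [show P + 1 + (Q + 1) - 1 - (j + 1) = Q + P - j by omega,
      show P + 1 + (Q + 1) - (j + 1) = Q + P + 1 - j by omega]
    simp only [Nat.add_sub_cancel]
    ring
  rw [c1, c2]
  simp only [Nat.add_sub_cancel, Nat.sub_zero]
  rw [show P + 1 + (Q + 1) - 1 = P + Q + 1 by omega, show Q + P + 1 = P + Q + 1 by omega,
    neg_pow (m : ℂ)⁻¹ (P + Q + 2)]
  have hP : (-1 : ℂ) ^ P * (-1) ^ P = 1 := by rw [← mul_pow]; simp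
  have hQ : (-1 : ℂ) ^ Q * (-1) ^ Q = 1 := by rw [← mul_pow]; simp
  simp only [pow_add, pow_one, pow_zero]
  rw [show (-1 : ℂ) ^ 2 = 1 by norm_num]
  generalize (-1 : ℂ) ^ P = a at *
  generalize (-1 : ℂ) ^ Q = b at *
  set X := ∑ j ∈ range (P + 1), (Nat.choose (P + Q - j) Q : ℂ) *
        (-(m : ℂ)⁻¹) ^ (P + Q + 1 - j) * LamNegI (j + 1)
  linear_combination (-b * X) * hP + (- I ^ m * a * (Nat.choose (P + Q + 1) P : ℂ) *
    ((m : ℂ)⁻¹) ^ P * ((m : ℂ)⁻¹) ^ Q * ((m : ℂ)⁻¹) ^ 2) * hQ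

lemma cpow_split (s : ℂ) (n k : ℕ) (x : ℂ) :
    x / ((n + 1 : ℕ) : ℂ) ^ (s + k) =
      x / ((n + 1 : ℕ) : ℂ) ^ s * (((n + 1 : ℕ) : ℂ)⁻¹) ^ k := by
  rw [cpow_add _ _ (by exact_mod_cast (Nat.succ_ne_zero n)), cpow_natCast, inv_pow]
  rw [div_eq_mul_inv, div_eq_mul_inv, mul_inv, mul_assoc]

lemma hasSum_phi (s : ℝ) (hs : 1 < s) (k : ℕ) :
    HasSum (fun n : ℕ => (-1 : ℂ) ^ (n + 1) / ((n + 1 : ℕ) : ℂ) ^ (s : ℂ) *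
      (((n + 1 : ℕ) : ℂ)⁻¹) ^ k) (phi ((s : ℂ) + k)) := by
  have hw : 1 < ((s : ℂ) + k).re := by
    simp; linarith [Nat.cast_nonneg (α := ℝ) k]
  have hw0 : (s : ℂ) + k ≠ 0 := by
    intro h; rw [h] at hw; simp at hw; linarith
  have h := (hasSum_nat_add_iff' 1).2 (hasSum_alt _ hw)
  simp only [sum_range_one, Nat.cast_zero, zero_cpow hw0, div_zero, sub_zero] at h
  exact hasSum_of_eq h fun n => (cpow_split _ _ _ _).symm

lemma hasSum_phiNQ (s : ℝ) (hs : 1 < s) (k : ℕ) :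
    HasSum (fun n : ℕ => (-1 : ℂ) ^ (n + 1) / ((n + 1 : ℕ) : ℂ) ^ (s : ℂ) *
      (I ^ (n + 1) * (((n + 1 : ℕ) : ℂ)⁻¹) ^ k)) (phiNegQuarter ((s : ℂ) + k)) := by
  have hw : 1 < ((s : ℂ) + k).re := by
    simp; linarith [Nat.cast_nonneg (α := ℝ) k]
  have h1 : Summable (fun n : ℕ => 1 / (n : ℂ) ^ ((s : ℂ) + k)) :=
    Complex.summable_one_div_nat_cpow.2 hw
  have h2 : Summable (fun n : ℕ => 1 / ((n + 1 : ℕ) : ℂ) ^ ((s : ℂ) + k)) :=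
    (summable_nat_add_iff 1).2 h1
  have h3 : Summable (fun n : ℕ => (-I) ^ (n + 1) / ((n + 1 : ℕ) : ℂ) ^ ((s : ℂ) + k)) := by
    refine Summable.of_norm_bounded h2.norm fun n => le_of_eq ?_
    rw [norm_div, norm_div]
    simp
  refine hasSum_of_eq h3.hasSum fun n => ?_
  rw [cpow_split, neg_pow I]
  ring

/-- The general term of the double series. -/
noncomputable def Gm (p q : ℕ) (s : ℝ) (n : ℕ) (l : ℤ) : ℂ :=
  (-1 : ℂ) ^ (n + 1) / ((n + 1 : ℕ) : ℂ) ^ (s : ℂ) * tm p q (n + 1) l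

lemma T_term (p q : ℕ) (hp : 0 < p) (hq : 0 < q) (s : ℝ) (n : ℕ) (l : ℤ) :
    (if l ≠ 0 ∧ l + ((n : ℤ) + 1) ≠ 0 then
      (-I) ^ l * (-1) ^ (n + 1) /
        ((l : ℂ) ^ p * (((n + 1 : ℕ) : ℂ)) ^ (s : ℂ) * (((l + (n : ℤ) + 1 : ℤ) : ℂ)) ^ q)
    else 0) = Gm p q s n l := by
  unfold Gm tm
  by_cases hc : l ≠ 0 ∧ l + ((n : ℤ) + 1) ≠ 0
  · rw [if_pos hc]
    push_cast
    simp only [div_eq_mul_inv, mul_inv, inv_pow]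
    ring
  · rw [if_neg hc]
    rw [not_and_or, not_not, not_not] at hc
    rcases hc with hc | hc
    · subst hc
      simp [hp.ne']
    · have : (l : ℂ) + (n + 1 : ℕ) = 0 := by exact_mod_cast hc
      rw [this]
      simp [hq.ne']

lemma T_eq (p q : ℕ) (hp : 0 < p) (hq : 0 < q) (s : ℝ) :
    T p (s : ℂ) q (-Complex.I) (-1) = ∑' x : ℕ × ℤ, Gm p q s x.1 x.2 := by
  have h : T p (s : ℂ) q (-Complex.I) (-1) = ∑' x : ℤ × ℕ, Gm p q s x.2 x.1 := by
    unfold T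
    exact tsum_congr fun x => T_term p q hp hq s x.2 x.1
  rw [h]
  exact (Equiv.prodComm ℤ ℕ).tsum_eq (fun x : ℕ × ℤ => Gm p q s x.1 x.2)

lemma T_aux (p q : ℕ) (hp : 0 < p) (hq : 0 < q) (s : ℝ) (hs : 1 < s) :
    HasSum (fun n : ℕ => (-1 : ℂ) ^ (n + 1) / ((n + 1 : ℕ) : ℂ) ^ (s : ℂ) * Sm p q (n + 1))
      (T p (s : ℂ) q (-Complex.I) (-1)) := by
  have hs : Summable (fun x : ℕ × ℤ => Gm p q s x.1 x.2) := summable_full p q hp hq s hs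
  have h := hs.hasSum
  rw [← T_eq p q hp hq s] at h
  have hf : ∀ n, HasSum (fun l => Gm p q s n l)
      ((-1 : ℂ) ^ (n + 1) / ((n + 1 : ℕ) : ℂ) ^ (s : ℂ) * Sm p q (n + 1)) := by
    intro n
    obtain ⟨P, rfl⟩ : ∃ P, p = P + 1 := ⟨p - 1, by omega⟩
    obtain ⟨Q, rfl⟩ : ∃ Q, q = Q + 1 := ⟨q - 1, by omega⟩
    unfold Gm
    exact (hasSum_tm P Q (n + 1) (by omega)).mul_left _
  exact h.prod_fiberwise hf

/-- Evaluation of `T(p,s,q;-i,-1)` in terms of `Λ(·;-i)`, `φ` and Lerch values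
(Lemma 6.2, second formula, of Komori–Matsumoto–Tsumura). -/
theorem T_eval_negI_negone (p q : ℕ) (hp : 0 < p) (hq : 0 < q) (s : ℝ) (hs : 1 < s) :
    T p (s : ℂ) q (-Complex.I) (-1) =
      (-1 : ℂ) ^ p * ∑ l ∈ range (p + 1), (-1 : ℂ) ^ l * LamNegI l *
          (Nat.choose (p + q - 1 - l) (q - 1) : ℂ) *
          phi ((s : ℂ) + p + q - l) +
      (-1 : ℂ) ^ p * ∑ l ∈ range (q + 1), LamNegI l *
          (Nat.choose (p + q - 1 - l) (p - 1) : ℂ) *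
          phiNegQuarter ((s : ℂ) + p + q - l) := by

  refine (T_aux p q hp hq s hs).unique ?_
  have h1 := (hasSum_sum (s := range (p + 1)) fun l (_ : l ∈ range (p + 1)) =>
    (hasSum_phi s hs (p + q - l)).mul_left ((-1 : ℂ) ^ l * LamNegI l *
          (Nat.choose (p + q - 1 - l) (q - 1) : ℂ))).mul_left ((-1 : ℂ) ^ p)
  have h2 := (hasSum_sum (s := range (q + 1)) fun l (_ : l ∈ range (q + 1)) =>
    (hasSum_phiNQ s hs (p + q - l)).mul_left (LamNegI l *
          (Nat.choose (p + q - 1 - l) (p - 1) : ℂ))).mul_left ((-1 : ℂ) ^ p)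
  have h3 := h1.add h2
  have e : ∀ l : ℕ, l ≤ p + q → (s : ℂ) + ((p + q - l : ℕ) : ℂ) = (s : ℂ) + p + q - l := by
    intro l hl
    rw [Nat.cast_sub hl]
    push_cast
    ring
  have e1 : ∑ l ∈ range (p + 1), (-1 : ℂ) ^ l * LamNegI l *
        (Nat.choose (p + q - 1 - l) (q - 1) : ℂ) * phi ((s : ℂ) + p + q - l) =
      ∑ l ∈ range (p + 1), (-1 : ℂ) ^ l * LamNegI l *
        (Nat.choose (p + q - 1 - l) (q - 1) : ℂ) * phi ((s : ℂ) + ((p + q - l : ℕ) : ℂ)) :=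
    sum_congr rfl fun l hl => by rw [mem_range] at hl; rw [e l (by omega)]
  have e2 : ∑ l ∈ range (q + 1), LamNegI l *
        (Nat.choose (p + q - 1 - l) (p - 1) : ℂ) * phiNegQuarter ((s : ℂ) + p + q - l) =
      ∑ l ∈ range (q + 1), LamNegI l *
        (Nat.choose (p + q - 1 - l) (p - 1) : ℂ) *
          phiNegQuarter ((s : ℂ) + ((p + q - l : ℕ) : ℂ)) :=
    sum_congr rfl fun l hl => by rw [mem_range] at hl; rw [e l (by omega)]
  rw [e1, e2]
  refine hasSum_of_eq h3 fun n => ?_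
  unfold Sm
  simp only [mul_add, mul_sum]
  congr 1
  · apply sum_congr rfl
    intro l _
    ring
  · apply sum_congr rfl
    intro l _
    ring
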